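/- Let c > 1 be a non-integer real number. There exist positive constants θ and δ (depending on c) such that for all N ≥ 1, all moduli 1 ≤ m ≤ N^θ and all residues 0 ≤ u < m, the count #{n ≤ N : ⌊n^c⌋ ≡ u (mod m)} equals N/m + O((N/m)^{1−δ}). -/

import Mathlib

open Real Finset
noncomputable def ee (x : ℝ) : ℂ := Complex.exp ((2 * π * x : ℝ) * Complex.I)

lemma norm_ee (x : ℝ) : ‖ee x‖ = 1 := Complex.norm_exp_ofReal_mul_I _

lemma ee_add (x y : ℝ) : ee (x + y) = ee x * ee y := by
  unfold ee; rw [← Complex.exp_add]; congr 1; push_cast; ring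

lemma ee_zero : ee 0 = 1 := by simp [ee]

lemma conj_ee (x : ℝ) : (starRingEnd ℂ) (ee x) = ee (-x) := by
  unfold ee; rw [← Complex.exp_conj]; congr 1
  rw [map_mul, Complex.conj_ofReal, Complex.conj_I]; push_cast; ring

lemma ee_ne (x : ℝ) : ee x ≠ 0 := Complex.exp_ne_zero _

lemma norm_one_sub_ee (x : ℝ) : ‖1 - ee x‖ = 2 * |sin (π * x)| := by
  rw [norm_sub_rev]
  unfold ee
  rw [mul_comm _ Complex.I, Complex.norm_exp_I_mul_ofReal_sub_one]
  rw [norm_eq_abs, abs_mul]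
  norm_num
  congr 2; ring

lemma norm_one_sub_ee_ge (x : ℝ) (h0 : 0 ≤ x) (h1 : x ≤ 1/2) : 4 * x ≤ ‖1 - ee x‖ := by
  rw [norm_one_sub_ee]
  have h2 : 2 / π * (π * x) ≤ sin (π * x) := Real.mul_le_sin (by positivity) (by nlinarith [pi_pos])
  have h3 : 2 / π * (π * x) = 2 * x := by field_simp
  rw [h3] at h2
  have := le_abs_self (sin (π * x))
  linarith

lemma norm_ee_sub (a b : ℝ) : ‖ee a - ee b‖ ≤ 2 * π * |a - b| := by
  have : ee a - ee b = - (ee b * (1 - ee (a - b))) := by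
    have : ee a = ee b * ee (a - b) := by rw [← ee_add]; congr 1; ring
    rw [this]; ring
  rw [this, norm_neg, norm_mul, norm_ee, one_mul, norm_one_sub_ee]
  have h := abs_sin_le_abs (x := π * (a - b))
  rw [abs_mul, abs_of_pos pi_pos] at h
  nlinarith

/-- Kusmin–Landau inequality. -/
lemma kusmin_landau (f : ℕ → ℝ) (b : ℕ) (lam : ℝ) (hl : 0 < lam)
    (h1 : ∀ n ≤ b, lam ≤ f (n + 1) - f n) (h2 : ∀ n ≤ b, f (n + 1) - f n ≤ 1 / 2)
    (h3 : ∀ n < b, f (n + 2) - f (n + 1) ≤ f (n + 1) - f n) :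
    ‖∑ n ∈ range b, ee (f n)‖ ≤ 1 / lam := by
  set d : ℕ → ℝ := fun n => f (n + 1) - f n with hd
  set g : ℕ → ℂ := fun n => (1 - ee (d n))⁻¹ with hg
  have hpos : ∀ n ≤ b, 0 < d n := fun n hn => lt_of_lt_of_le hl (h1 n hn)
  have hge : ∀ n ≤ b, 4 * d n ≤ ‖1 - ee (d n)‖ := fun n hn =>
    norm_one_sub_ee_ge _ (hpos n hn).le (h2 n hn)
  have hne : ∀ n ≤ b, 1 - ee (d n) ≠ 0 := by
    intro n hn h
    have := hge n hn
    rw [h, norm_zero] at this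
    linarith [hpos n hn]
  have hgn : ∀ n ≤ b, ‖g n‖ ≤ 1 / (4 * d n) := by
    intro n hn
    rw [hg]; simp only [norm_inv]
    rw [← one_div]
    exact one_div_le_one_div_of_le (by linarith [hpos n hn]) (hge n hn)
  have hgd : ∀ n < b, ‖g (n + 1) - g n‖ ≤ 1 / 2 * (1 / d (n + 1) - 1 / d n) := by
    intro n hn
    have e : g (n + 1) - g n = (ee (d (n+1)) - ee (d n)) * (g (n + 1) * g n) := by
      have a1 := hne n hn.le
      have a2 := hne (n+1) hn
      simp only [hg]
      field_simp
      ring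
    have p1 := hpos n hn.le
    have p2 := hpos (n+1) hn
    rw [e, norm_mul, norm_mul]
    have q1 := hgn n hn.le
    have q2 := hgn (n+1) hn
    have q3 := norm_ee_sub (d (n+1)) (d n)
    have q4 : d (n+1) ≤ d n := h3 n hn
    rw [abs_of_nonpos (by linarith)] at q3
    calc _ ≤ (2 * π * -(d (n+1) - d n)) * (1 / (4 * d (n+1)) * (1 / (4 * d n))) := by
          gcongr
          exact mul_nonneg (by positivity) (by linarith)
      _ = π / 8 * (1 / d (n + 1) - 1 / d n) := by field_simp; ring
      _ ≤ _ := by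
        have : 1 / d n ≤ 1 / d (n+1) := one_div_le_one_div_of_le p2 q4
        have := pi_lt_four
        nlinarith
  have key : ∀ b' ≤ b, ∑ n ∈ range b', ee (f n) = g 0 * ee (f 0) - g b' * ee (f b') +
      ∑ n ∈ range b', (g (n + 1) - g n) * ee (f (n + 1)) := by
    intro b' hb'
    induction b' with
    | zero => simp
    | succ m ih =>
      rw [sum_range_succ, sum_range_succ, ih (by omega)]
      have : ee (f m) = g m * (ee (f m) - ee (f (m+1))) := by
        have e2 : ee (f (m+1)) = ee (f m) * ee (d m) := by
          rw [← ee_add]; congr 1; simp [hd]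
        have a1 := hne m (by omega)
        simp only [hg]
        rw [e2]; field_simp
      linear_combination this
  have hsum : ∀ b' ≤ b, ∑ n ∈ range b', ‖g (n + 1) - g n‖ ≤ 1 / 2 * (1 / d b' - 1 / d 0) := by
    intro b' hb'
    induction b' with
    | zero => simp
    | succ m ih =>
      rw [sum_range_succ]
      have := ih (by omega)
      have := hgd m (by omega)
      linarith
  rw [key b le_rfl]
  have t1 := norm_add_le (g 0 * ee (f 0) - g b * ee (f b))
    (∑ n ∈ range b, (g (n + 1) - g n) * ee (f (n + 1)))
  have t2 := norm_sub_le (g 0 * ee (f 0)) (g b * ee (f b))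
  rw [norm_mul, norm_mul, norm_ee, norm_ee] at t2
  have t3 := norm_sum_le (range b) (fun n => (g (n + 1) - g n) * ee (f (n + 1)))
  simp only [norm_mul, norm_ee, mul_one] at t3
  have t4 := hsum b le_rfl
  have t5 := hgn 0 (Nat.zero_le _)
  have t6 := hgn b le_rfl
  have t7 : 1 / d b ≤ 1 / lam := one_div_le_one_div_of_le hl (h1 b le_rfl)
  have t8 : 1 / (4 * d 0) = 1 / 4 * (1 / d 0) := by field_simp
  have t9 : 1 / (4 * d b) = 1 / 4 * (1 / d b) := by field_simp
  have t10 : 0 < 1 / d 0 := one_div_pos.2 (hpos 0 (Nat.zero_le _))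
  have t11 : 0 < 1 / d b := one_div_pos.2 (hpos b le_rfl)
  linarith

/-- van der Corput differencing. -/
lemma weyl (z : ℕ → ℂ) (hz : ∀ n, ‖z n‖ ≤ 1) (b L H : ℕ) (hb : b ≤ L) (hHL : H ≤ L)
    (hH : 1 ≤ H) (B : ℝ)
    (hB : ∀ d, 1 ≤ d → d < H → ∀ b' ≤ b,
      ‖∑ n ∈ range b', z (n + d) * (starRingEnd ℂ) (z n)‖ ≤ B) (hB0 : 0 ≤ B) :
    ‖∑ n ∈ range b, z n‖ ^ 2 ≤ 2 * (L : ℝ) ^ 2 / H + 2 * L * B := by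
  set u : ℕ → ℕ → ℂ := fun h m => if m ∈ Ico h (b + h) then z (m - h) else 0 with hu
  set V : ℕ → ℂ := fun m => ∑ h ∈ range H, u h m with hV
  have hIco : ∀ h < H, ∀ h', h ≤ h' →  (range (b + H)).filter
      (fun m => m ∈ Ico h (b + h) ∧ m ∈ Ico h' (b + h')) = Ico h' (b + h) := by
    intro h hh h' hh'
    ext m; simp; omega
  have hprod : ∀ h < H, ∀ h', h ≤ h' → ∑ m ∈ range (b + H), u h m * (starRingEnd ℂ) (u h' m)
      = ∑ n ∈ range (b + h - h'), z (n + (h' - h)) * (starRingEnd ℂ) (z n) := by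
    intro h hh h' hh'
    have : ∀ m, u h m * (starRingEnd ℂ) (u h' m) = if m ∈ Ico h (b + h) ∧ m ∈ Ico h' (b + h') then
        z (m - h) * (starRingEnd ℂ) (z (m - h')) else 0 := by
      intro m
      simp only [hu]
      by_cases c1 : m ∈ Ico h (b + h) <;> by_cases c2 : m ∈ Ico h' (b + h') <;> simp [c1, c2]
    simp_rw [this]
    rw [← sum_filter, hIco h hh h' hh', sum_Ico_eq_sum_range]
    apply sum_congr rfl
    intro n hn
    congr 2
    · congr 1; omega
    · congr 1; omega
  have hS : ∑ m ∈ range (b + H), V m = H * ∑ n ∈ range b, z n := by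
    simp only [hV]
    rw [sum_comm]
    have : ∀ h ∈ range H, ∑ m ∈ range (b + H), u h m = ∑ n ∈ range b, z n := by
      intro h hh
      have hh : h < H := by simpa using hh
      simp only [hu]
      rw [← sum_filter]
      have : (range (b + H)).filter (fun m => m ∈ Ico h (b + h)) = Ico h (b + h) := by
        ext m; simp; omega
      rw [this, sum_Ico_eq_sum_range]
      simp
    rw [sum_congr rfl this]; simp
  have hCS : ‖∑ m ∈ range (b + H), V m‖ ^ 2 ≤ (b + H : ℝ) * ∑ m ∈ range (b + H), ‖V m‖ ^ 2 := by
    have h1 := norm_sum_le (range (b + H)) V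
    have h2 := sq_sum_le_card_mul_sum_sq (s := range (b + H)) (f := fun m => ‖V m‖)
    simp only [card_range] at h2
    push_cast at h2
    exact (pow_le_pow_left₀ (norm_nonneg _) h1 2).trans h2
  have hVV : (∑ m ∈ range (b + H), ‖V m‖ ^ 2 : ℝ) ≤ H * L + (H : ℝ)^2 * B := by
    have e : ((∑ m ∈ range (b + H), ‖V m‖ ^ 2 : ℝ) : ℂ) = ∑ h ∈ range H, ∑ h' ∈ range H,
        ∑ m ∈ range (b + H), u h m * (starRingEnd ℂ) (u h' m) := by
      push_cast
      have : ∀ m ∈ range (b + H), (‖V m‖ : ℂ) ^ 2 = ∑ h ∈ range H, ∑ h' ∈ range H,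
          u h m * (starRingEnd ℂ) (u h' m) := by
        intro m _
        rw [← Complex.mul_conj', hV]
        simp only [map_sum]
        rw [sum_mul_sum]
      rw [sum_congr rfl this, sum_comm]
      apply sum_congr rfl
      intro h _
      rw [sum_comm]
    have e2 : (∑ m ∈ range (b + H), ‖V m‖ ^ 2 : ℝ) = ‖((∑ m ∈ range (b + H), ‖V m‖ ^ 2 : ℝ) : ℂ)‖ := by
      rw [Complex.norm_real, norm_of_nonneg]; positivity
    rw [e2, e]
    calc _ ≤ ∑ h ∈ range H, ∑ h' ∈ range H, ((if h = h' then (L:ℝ) else 0) + B) := by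
          apply norm_sum_le_of_le
          intro h hh
          apply norm_sum_le_of_le
          intro h' hh'
          have hh : h < H := by simpa using hh
          have hh' : h' < H := by simpa using hh'
          rcases lt_trichotomy h h' with hlt | heq | hgt
          · rw [hprod h hh h' hlt.le, if_neg hlt.ne, zero_add]
            exact hB _ (by omega) (by omega) _ (by omega)
          · subst heq
            rw [hprod h hh h le_rfl, if_pos rfl]
            have : ‖∑ n ∈ range (b + h - h), z (n + (h - h)) * (starRingEnd ℂ) (z n)‖ ≤ b := by
              calc _ ≤ ∑ n ∈ range (b + h - h), (1:ℝ) := by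
                    apply norm_sum_le_of_le
                    intro n _
                    rw [norm_mul, RCLike.norm_conj]
                    exact mul_le_one₀ (hz _) (norm_nonneg _) (hz _)
                _ = b := by simp
            have hb' : (b:ℝ) ≤ L := by exact_mod_cast hb
            linarith
          · have : ∑ m ∈ range (b + H), u h m * (starRingEnd ℂ) (u h' m) =
              (starRingEnd ℂ) (∑ m ∈ range (b + H), u h' m * (starRingEnd ℂ) (u h m)) := by
              rw [map_sum]; apply sum_congr rfl; intro m _; simp [mul_comm]
            rw [this, RCLike.norm_conj, hprod h' hh' h hgt.le, if_neg hgt.ne', zero_add]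
            exact hB _ (by omega) (by omega) _ (by omega)
      _ = _ := by
          have e5 : ∑ x ∈ range H, (if x < H then (L:ℝ) else 0) = H * L := by
            rw [sum_congr rfl (fun x hx => if_pos (mem_range.1 hx))]; simp
          simp [sum_add_distrib, e5]
          ring
  rw [hS, norm_mul, Complex.norm_natCast, mul_pow] at hCS
  have hHp : (0:ℝ) < H := by exact_mod_cast hH
  have hLp : (0:ℝ) ≤ L := by positivity
  have hbL : (b + H : ℝ) ≤ 2 * L := by
    have : b + H ≤ 2 * L := by omega
    exact_mod_cast this
  have : (H:ℝ)^2 * ‖∑ n ∈ range b, z n‖ ^ 2 ≤ 2 * L * (H * L + (H : ℝ)^2 * B) :=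
    hCS.trans (mul_le_mul hbL hVV (by positivity) (by positivity))
  have e3 : 2 * (L : ℝ) * (H * L + (H : ℝ)^2 * B) = (H:ℝ)^2 * (2 * (L : ℝ) ^ 2 / H + 2 * L * B) := by
    field_simp
  rw [e3] at this
  exact le_of_mul_le_mul_left this (by positivity)

def Dl : List ℝ → (ℝ → ℝ) → ℝ → ℝ
  | [], F => F
  | h :: t, F => Dl t (fun x => F (x + h) - F x)

lemma weyl_iter (L H : ℕ) (hHL : H ≤ L) (hH : 1 ≤ H) (x0 : ℝ) (j : ℕ) : ∀ (F : ℝ → ℝ),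
    (∀ hs : List ℕ, hs.length = j → (∀ d ∈ hs, 1 ≤ d ∧ d < H) → ∀ b ≤ L,
      ‖∑ n ∈ range b, ee (Dl (hs.map (fun d : ℕ => (d : ℝ))) F (x0 + n))‖ ≤ 4 * L / H) →
    ∀ b ≤ L, ‖∑ n ∈ range b, ee (F (x0 + n))‖ ≤ 4 * L * (H : ℝ) ^ (-(1 / 2 : ℝ) ^ j) := by
  have hHp : (1:ℝ) ≤ H := by exact_mod_cast hH
  have hHp0 : (0:ℝ) < H := by linarith
  induction j with
  | zero =>
    intro F h b hb
    have := h [] rfl (by simp) b hb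
    simp only [List.map_nil, Dl] at this
    refine this.trans (le_of_eq ?_)
    rw [pow_zero, rpow_neg_one]; rfl
  | succ j ih =>
    intro F h b hb
    have hw := weyl (fun n => ee (F (x0 + n))) (fun n => (norm_ee _).le) b L H hb hHL hH
      (4 * L * (H : ℝ) ^ (-(1 / 2 : ℝ) ^ j)) (by
        intro d hd1 hd2 b' hb'
        have := ih (fun x => F (x + d) - F x) (by
          intro hs hl hhs b hb
          have := h (d :: hs) (by simp [hl]) (by
            intro d' hd'
            rcases List.mem_cons.1 hd' with rfl | h'
            · exact ⟨hd1, hd2⟩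
            · exact hhs _ h') b hb
          simpa only [List.map_cons, Dl] using this) b' (hb'.trans hb)
        convert this using 4 with n hn
        rw [conj_ee, ← ee_add]
        congr 1; push_cast; ring_nf) (by positivity)
    have e : (4 * L * (H : ℝ) ^ (-(1 / 2 : ℝ) ^ (j+1)))^2 = 16 * L^2 * (H : ℝ) ^ (-(1 / 2 : ℝ) ^ j) := by
      rw [mul_pow, mul_pow, ← rpow_natCast, ← rpow_natCast, ← rpow_natCast, ← rpow_mul hHp0.le]
      norm_num
      left
      congr 1; rw [pow_succ]; ring
    have e2 : (1:ℝ) / H ≤ (H : ℝ) ^ (-(1 / 2 : ℝ) ^ j) := by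
      rw [one_div, ← rpow_neg_one]
      apply rpow_le_rpow_of_exponent_le hHp
      have : (1/2:ℝ)^j ≤ 1 := pow_le_one₀ (by norm_num) (by norm_num)
      linarith
    refine le_of_sq_le_sq ?_ (by positivity)
    rw [e]
    refine hw.trans ?_
    have e3 : 2 * (L:ℝ) ^ 2 / H = 2 * L^2 * (1 / H) := by ring
    rw [e3]
    have hLL : 0 ≤ (L:ℝ)^2 := by positivity
    have hX : 0 ≤ (L:ℝ)^2 * (H : ℝ) ^ (-(1 / 2 : ℝ) ^ j) := by positivity
    nlinarith [mul_le_mul_of_nonneg_left e2 hLL]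

lemma Dl_cons (h : ℝ) (t : List ℝ) : ∀ (F : ℝ → ℝ) (x : ℝ),
    Dl (h :: t) F x = Dl t F (x + h) - Dl t F x := by
  induction t with
  | nil => intro F x; rfl
  | cons a t ih =>
    intro F x
    have e1 : Dl (h :: a :: t) F x = Dl (h :: t) (fun x => F (x + a) - F x) x := by
      simp only [Dl]
      congr 1
      funext y
      rw [show y + h + a = y + a + h by ring]; ring
    rw [e1, ih]; rfl

lemma Dl_smul (t : List ℝ) (s : ℝ) : ∀ (F : ℝ → ℝ) (x : ℝ),
    Dl t (fun y => s * F y) x = s * Dl t F x := by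
  induction t with
  | nil => intro F x; rfl
  | cons a t ih => intro F x; rw [Dl_cons, Dl_cons, ih, ih]; ring

lemma Dl_deriv (t : List ℝ) (ht : ∀ h ∈ t, 0 < h) (F F' : ℝ → ℝ)
    (hF : ∀ x, 0 < x → HasDerivAt F (F' x) x) :
    ∀ x, 0 < x → HasDerivAt (Dl t F) (Dl t F' x) x := by
  induction t with
  | nil => exact hF
  | cons a t ih =>
    intro x hx
    have ih := ih (fun h hh => ht h (List.mem_cons_of_mem _ hh))
    have ha : 0 < a := ht a (by simp)
    have : Dl (a :: t) F = fun x => Dl t F (x + a) - Dl t F x := funext (fun x => Dl_cons a t F x)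
    rw [this, Dl_cons]
    exact (HasDerivAt.comp_add_const x a (ih (x + a) (by linarith))).sub (ih x hx)

noncomputable def fall (s : ℝ) (j : ℕ) : ℝ := ∏ i ∈ range j, (s - i)

lemma fall_succ' (s : ℝ) (j : ℕ) : fall s (j + 1) = s * fall (s - 1) j := by
  unfold fall
  rw [prod_range_succ', mul_comm]
  congr 1
  · simp
  · apply prod_congr rfl; intro i _; push_cast; ring

lemma Dl_rpow (t : List ℝ) (ht : ∀ h ∈ t, 0 < h) : ∀ (s x : ℝ), 0 < x →
    ∃ y, x ≤ y ∧ y ≤ x + t.sum ∧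
      Dl t (fun z => z ^ s) x = t.prod * fall s t.length * y ^ (s - t.length) := by
  induction t with
  | nil => intro s x hx; exact ⟨x, le_rfl, by simp, by simp [Dl, fall]⟩
  | cons a t ih =>
    intro s x hx
    have ha : 0 < a := ht a (by simp)
    have ht' : ∀ h ∈ t, 0 < h := fun h hh => ht h (List.mem_cons_of_mem _ hh)
    have hd := Dl_deriv t ht' (fun z => z ^ s) (fun z => s * z ^ (s - 1)) (fun x hx =>
      Real.hasDerivAt_rpow_const (Or.inl hx.ne'))
    obtain ⟨w, hw, hw2⟩ := exists_hasDerivAt_eq_slope (Dl t (fun z => z ^ s)) _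
      (show x < x + a by linarith)
      (fun y hy => (hd y (by linarith [hy.1])).continuousAt.continuousWithinAt)
      (fun y hy => hd y (by linarith [hy.1]))
    obtain ⟨y, hy1, hy2, hy3⟩ := ih ht' (s - 1) w (by linarith [hw.1])
    refine ⟨y, by linarith [hw.1], by simp only [List.sum_cons]; linarith [hw.2], ?_⟩
    rw [Dl_cons]
    rw [Dl_smul, hy3] at hw2
    rw [show x + a - x = a by ring, eq_div_iff ha.ne'] at hw2
    rw [← hw2]
    simp only [List.prod_cons, List.length_cons, fall_succ']
    rw [show s - ((t.length + 1 : ℕ) : ℝ) = s - 1 - t.length by push_cast; ring]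
    ring

/-- The second Bernoulli function and the sawtooth. -/
noncomputable def ps2 (x : ℝ) : ℝ := Int.fract x ^ 2 - Int.fract x + 1 / 6

noncomputable def ps1 (x : ℝ) : ℝ := Int.fract x - 1 / 2

lemma ps2_le (x t : ℝ) : ps2 (x + t) ≤ ps2 x + 2 * t * ps1 x + t ^ 2 := by
  unfold ps2 ps1
  have h1 := Int.fract_nonneg (x + t)
  have h2 := Int.fract_lt_one (x + t)
  have e1 := Int.floor_add_fract (x + t)
  have e2 := Int.floor_add_fract x
  set f := Int.fract (x + t)
  set r := Int.fract x
  obtain ⟨k, hk⟩ : ∃ k : ℤ, k = ⌊x + t⌋ - ⌊x⌋ := ⟨_, rfl⟩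
  have hk' : (k : ℝ) = r + t - f := by rw [hk]; push_cast; linarith
  have hkk : 0 ≤ (k:ℝ) * (k - 1 + 2 * f) := by
    rcases lt_trichotomy k 0 with h | h | h
    · have : (k:ℝ) ≤ -1 := by exact_mod_cast (by omega : k ≤ -1)
      apply mul_nonneg_of_nonpos_of_nonpos <;> linarith
    · simp [h]
    · have : (1:ℝ) ≤ k := by exact_mod_cast h
      apply mul_nonneg <;> linarith
  have e : r ^ 2 - r + 2 * t * (r - 1 / 2) + t ^ 2 - (f ^ 2 - f) = k * (k - 1 + 2 * f) := by
    rw [hk']; ring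
  linarith

lemma ps2_fourier (x : ℝ) :
    HasSum (fun n : ℕ => 1 / (n : ℝ) ^ 2 * Real.cos (2 * π * n * x)) (π ^ 2 * ps2 x) := by
  have h := hasSum_one_div_nat_pow_mul_cos (k := 1) one_ne_zero (x := Int.fract x)
    ⟨Int.fract_nonneg x, (Int.fract_lt_one x).le⟩
  convert! h using 1
  · funext n
    congr 1
    have : 2 * π * n * x = 2 * π * n * Int.fract x + ((n * ⌊x⌋ : ℤ) : ℝ) * (2 * π) := by
      nth_rewrite 1 [← Int.floor_add_fract x]; push_cast; ring
    rw [this, Real.cos_add_int_mul_two_pi]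
  · have : (Polynomial.map (algebraMap ℚ ℝ) (Polynomial.bernoulli (2 * 1))).eval (Int.fract x) =
      ps2 x := by
      unfold ps2
      simp [Polynomial.bernoulli, sum_range_succ, Polynomial.eval_monomial, bernoulli_two, bernoulli_one]
      ring
    rw [this, show Nat.factorial (2 * 1) = 2 from rfl]
    push_cast
    ring

lemma list_bounds (H : ℝ) (hs : List ℝ) (h : ∀ d ∈ hs, 1 ≤ d ∧ d ≤ H) :
    1 ≤ hs.prod ∧ hs.prod ≤ H ^ hs.length ∧ 0 ≤ hs.sum ∧ hs.sum ≤ hs.length * H := by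
  induction hs with
  | nil => simp
  | cons a t ih =>
    obtain ⟨i1, i2, i3, i4⟩ := ih (fun d hd => h d (List.mem_cons_of_mem _ hd))
    obtain ⟨a1, a2⟩ := h a (by simp)
    simp only [List.prod_cons, List.sum_cons, List.length_cons]
    refine ⟨by nlinarith, ?_, by linarith, ?_⟩
    · rw [pow_succ, mul_comm]
      exact mul_le_mul i2 a2 (by linarith) (by linarith)
    · push_cast; linarith

lemma fall_pos (c : ℝ) (k : ℕ) (hk : (k : ℝ) - 1 < c) : 0 < fall c k := by
  apply prod_pos
  intro i hi
  have : i + 1 ≤ k := mem_range.1 hi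
  have : (i : ℝ) + 1 ≤ k := by exact_mod_cast this
  linarith

lemma diff_sum (c : ℝ) (k : ℕ) (hk1 : (k + 1 : ℝ) - 1 < c) (hk2 : c < k + 1) (α : ℝ) (hα : 0 < α)
    (N H : ℕ) (hH : 1 ≤ H) (hHN : H ≤ N) (x0 : ℝ) (hx0 : 0 < x0) (hx1 : x0 ≤ 2 * N)
    (hE : α * (H ^ k * fall c (k + 1) * x0 ^ (c - (k + 1 : ℝ))) ≤ 1 / 2)
    (hs : List ℕ) (hl : hs.length = k) (hd : ∀ d ∈ hs, 1 ≤ d ∧ d < H) (b : ℕ) (hb : b ≤ N) :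
    ‖∑ n ∈ range b, ee (Dl (hs.map (fun d : ℕ => (d : ℝ))) (fun x => α * x ^ c) (x0 + n))‖ ≤
      1 / (α * (fall c (k + 1) * ((k + 4 : ℝ) * N) ^ (c - (k + 1 : ℝ)))) := by
  set t := hs.map (fun d : ℕ => (d : ℝ)) with ht
  have htl : t.length = k := by simp [ht, hl]
  have htd : ∀ d ∈ t, (1:ℝ) ≤ d ∧ d ≤ H := by
    intro d hd'
    obtain ⟨a, ha, rfl⟩ := List.mem_map.1 hd'
    exact ⟨by exact_mod_cast (hd a ha).1, by exact_mod_cast (hd a ha).2.le⟩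
  have htp : ∀ d ∈ t, 0 < d := fun d hd => by linarith [(htd d hd).1]
  obtain ⟨q1, q2, q3, q4⟩ := list_bounds H t htd
  rw [htl] at q2 q4
  have hA : 0 < fall c (k + 1) := fall_pos c (k + 1) (by push_cast; linarith)
  have hN : (1:ℝ) ≤ N := by exact_mod_cast hH.trans hHN
  have hHN' : (H:ℝ) ≤ N := by exact_mod_cast hHN
  have e1 : ∀ n : ℕ, Dl t (fun x => α * x ^ c) (x0 + (n + 1 : ℕ)) - Dl t (fun x => α * x ^ c) (x0 + n)
      = α * Dl (1 :: t) (fun x => x ^ c) (x0 + n) := by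
    intro n
    rw [Dl_cons, Dl_smul, Dl_smul]; push_cast
    rw [← add_assoc]; ring
  have e2 : ∀ n : ℕ, Dl (1 :: t) (fun x => x ^ c) (x0 + (n + 1 : ℕ)) - Dl (1 :: t) (fun x => x ^ c) (x0 + n)
      = Dl (1 :: 1 :: t) (fun x => x ^ c) (x0 + n) := by
    intro n
    rw [Dl_cons 1 (1 :: t)]; push_cast
    rw [← add_assoc]
  have hp1 : ∀ h ∈ (1 :: t), 0 < h := by
    intro h hh; rcases List.mem_cons.1 hh with rfl | h'
    · exact one_pos
    · exact htp _ h'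
  have hp2 : ∀ h ∈ (1 :: 1 :: t), 0 < h := by
    intro h hh; rcases List.mem_cons.1 hh with rfl | h'
    · exact one_pos
    · exact hp1 _ h'
  have hy : ∀ n : ℕ, ∃ y, x0 + n ≤ y ∧ y ≤ x0 + n + (1 + t.sum) ∧
      Dl (1 :: t) (fun x => x ^ c) (x0 + n) = t.prod * fall c (k + 1) * y ^ (c - (k + 1 : ℝ)) := by
    intro n
    obtain ⟨y, y1, y2, y3⟩ := Dl_rpow (1 :: t) hp1 c (x0 + n) (by positivity)
    refine ⟨y, y1, by simpa using y2, ?_⟩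
    rw [y3]; simp [htl]
  apply kusmin_landau
  · positivity
  · intro n hn
    rw [e1]
    obtain ⟨y, y1, y2, y3⟩ := hy n
    rw [y3]
    have hyp : 0 < y := by have : (0:ℝ) ≤ n := by positivity
                           linarith
    have hnb : (n:ℝ) ≤ N := by exact_mod_cast hn.trans hb
    have hkH : (k:ℝ) * H ≤ k * N := by gcongr
    have : ((k + 4 : ℝ) * N) ^ (c - (k + 1 : ℝ)) ≤ y ^ (c - (k + 1 : ℝ)) :=
      rpow_le_rpow_of_nonpos hyp (by nlinarith) (by linarith)
    gcongr
    exact le_mul_of_one_le_left hA.le q1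
  · intro n hn
    rw [e1]
    obtain ⟨y, y1, y2, y3⟩ := hy n
    rw [y3]
    refine le_trans ?_ hE
    have : y ^ (c - (k + 1 : ℝ)) ≤ x0 ^ (c - (k + 1 : ℝ)) :=
      rpow_le_rpow_of_nonpos hx0 (by have : (0:ℝ) ≤ n := by positivity
                                     linarith) (by linarith)
    have hyp : 0 < y := by have : (0:ℝ) ≤ n := by positivity
                           linarith
    gcongr
  · intro n hn
    have a1 := e1 n
    have a2 := e1 (n + 1)
    have a3 := e2 n
    rw [show n + 1 + 1 = n + 2 from rfl] at a2
    rw [a1, a2]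
    apply mul_le_mul_of_nonneg_left _ hα.le
    obtain ⟨y, y1, y2, y3⟩ := Dl_rpow (1 :: 1 :: t) hp2 c (x0 + n) (by positivity)
    have hyp : 0 < y := by have : (0:ℝ) ≤ n := by positivity
                           linarith
    have : Dl (1 :: 1 :: t) (fun x => x ^ c) (x0 + n) ≤ 0 := by
      rw [y3]
      apply mul_nonpos_of_nonpos_of_nonneg _ (by positivity)
      apply mul_nonpos_of_nonneg_of_nonpos
      · simp only [List.prod_cons, one_mul]; linarith
      · simp only [List.length_cons, htl]
        have : fall c (k + 1 + 1) = fall c (k + 1) * (c - (k + 1 : ℕ)) := prod_range_succ _ _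
        rw [this]
        apply mul_nonpos_of_nonneg_of_nonpos hA.le
        push_cast; linarith
    linarith

lemma ev_small (K s e : ℝ) (hs : s < 0) (he : 0 < e) : ∀ᶠ N : ℕ in Filter.atTop, K * (N : ℝ) ^ s ≤ e := by
  have h := (tendsto_rpow_neg_atTop (y := -s) (by linarith)).comp (tendsto_natCast_atTop_atTop (R := ℝ))
  have h2 := h.const_mul K
  rw [mul_zero] at h2
  have h3 := h2.eventually (ge_mem_nhds he)
  filter_upwards [h3] with N hN
  simpa using hN

theorem expsum (c : ℝ) (hc : 1 < c) (hci : ∀ z : ℤ, c ≠ z) :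
    ∃ θ > (0 : ℝ), θ ≤ 1 ∧ ∃ η > (0 : ℝ), η ≤ θ / 2 ∧ ∀ᶠ N : ℕ in Filter.atTop, ∀ α : ℝ,
      (N : ℝ) ^ (-θ) ≤ α → α ≤ (N : ℝ) ^ θ →
      ‖∑ n ∈ range N, ee (α * ((n : ℝ) + 1) ^ c)‖ ≤ 10 * (N : ℝ) ^ (1 - η) := by
  obtain ⟨k, hk1, hk2, hk0⟩ : ∃ k : ℕ, (k : ℝ) < c ∧ c < k + 1 ∧ 1 ≤ k := by
    refine ⟨⌊c⌋₊, ?_, Nat.lt_floor_add_one c, Nat.le_floor (by simpa using hc.le)⟩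
    exact lt_of_le_of_ne (Nat.floor_le (by linarith)) (fun h => hci (⌊c⌋₊ : ℤ) (by
      rw [← h]; simp))
  set κ : ℝ := k + 1 - c with hκ
  have hκ0 : 0 < κ := by linarith
  have hκ1 : κ < 1 := by linarith
  have hkp : (1:ℝ) ≤ k := by exact_mod_cast hk0
  set θ : ℝ := min (κ / (4 * (k + 1))) ((1 - κ) / 4) with hθ
  have hθ0 : 0 < θ := lt_min (by positivity) (by linarith)
  have hθ1 : θ ≤ (1 - κ) / 4 := min_le_right _ _
  have hθ2 : (k + 1) * θ ≤ κ / 4 := by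
    have : θ ≤ κ / (4 * (k + 1)) := min_le_left _ _
    calc _ ≤ (k + 1) * (κ / (4 * (k + 1))) := by gcongr
      _ = _ := by field_simp
  set A := fall c (k + 1) with hAdef
  have hA : 0 < A := fall_pos c (k + 1) (by push_cast; linarith)
  set q : ℝ := (1 / 2 : ℝ) ^ k with hq
  have hq0 : 0 < q := by positivity
  have hq1 : q ≤ 1 / 2 := by
    calc q ≤ (1 / 2 : ℝ) ^ 1 := pow_le_pow_of_le_one (by norm_num) (by norm_num) hk0
      _ = _ := by norm_num
  refine ⟨θ, hθ0, by linarith, θ * q, by positivity, by nlinarith, ?_⟩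
  have E1 := ev_small A ((k + 1) * θ - κ / 2) (1 / 2) (by linarith) (by norm_num)
  have E2 := ev_small ((k + 4 : ℝ) ^ κ / A) (2 * θ + κ - 1) 4 (by linarith) (by norm_num)
  filter_upwards [E1, E2, Filter.eventually_ge_atTop 4] with N h1 h2 hN4 α hα1 hα2
  have hNp : (4:ℝ) ≤ N := by exact_mod_cast hN4
  have hN0 : (0:ℝ) < N := by linarith
  have hN1 : (1:ℝ) ≤ N := by linarith
  have hα : 0 < α := lt_of_lt_of_le (by positivity) hα1
  have hNθ : 1 ≤ (N:ℝ) ^ θ := one_le_rpow hN1 hθ0.le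
  obtain ⟨H, hHdef⟩ : ∃ H : ℕ, H = ⌊(N:ℝ) ^ θ⌋₊ := ⟨_, rfl⟩
  have hH1 : 1 ≤ H := by rw [hHdef]; exact Nat.le_floor (by simpa using hNθ)
  have hHle : (H:ℝ) ≤ (N:ℝ) ^ θ := by rw [hHdef]; exact Nat.floor_le (by positivity)
  have hHge : (N:ℝ) ^ θ / 2 ≤ H := by
    have := Nat.lt_floor_add_one ((N:ℝ) ^ θ)
    rw [← hHdef] at this
    have : (1:ℝ) ≤ H := by exact_mod_cast hH1
    linarith
  have hHN : H ≤ N := by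
    have : (H:ℝ) ≤ N := hHle.trans (by
      calc (N:ℝ) ^ θ ≤ (N:ℝ) ^ (1:ℝ) := rpow_le_rpow_of_exponent_le hN1 (by linarith)
        _ = N := rpow_one _)
    exact_mod_cast this
  have hH0 : (0:ℝ) < H := by exact_mod_cast hH1
  obtain ⟨M, hMdef⟩ : ∃ M : ℕ, M = ⌈√(N:ℝ)⌉₊ := ⟨_, rfl⟩
  have hsq : √(N:ℝ) * √(N:ℝ) = N := mul_self_sqrt hN0.le
  have hsq2 : 2 ≤ √(N:ℝ) := by apply le_sqrt_of_sq_le; linarith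
  have hM1 : √(N:ℝ) ≤ M := by rw [hMdef]; exact Nat.le_ceil _
  have hM2 : (M:ℝ) ≤ 2 * √(N:ℝ) := by
    have := Nat.ceil_lt_add_one (sqrt_nonneg (N:ℝ))
    rw [← hMdef] at this
    linarith
  have hMN' : (M:ℝ) ≤ N := by nlinarith
  have hMN : M ≤ N := by exact_mod_cast hMN'
  -- the long part
  have hexp : c - (k + 1 : ℝ) = -κ := by rw [hκ]; ring
  have main : ‖∑ n ∈ range (N - M), ee ((fun x => α * x ^ c) ((M + 1 : ℝ) + n))‖ ≤
      4 * N * (H : ℝ) ^ (-(1 / 2 : ℝ) ^ k) := by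
    refine weyl_iter N H hHN hH1 (M + 1 : ℝ) k (fun x => α * x ^ c) ?_ (N - M) (Nat.sub_le _ _)
    intro hs hl hd b hb
    refine (diff_sum c k (by linarith) hk2 α hα N H hH1 hHN (M + 1) (by positivity) (by linarith)
      ?_ hs hl hd b hb).trans ?_
    · refine le_trans ?_ h1
      rw [hexp]
      have r1 : ((M:ℝ) + 1) ^ (-κ) ≤ (N:ℝ) ^ (-κ / 2) := by
        calc ((M:ℝ) + 1) ^ (-κ) ≤ (√(N:ℝ)) ^ (-κ) :=
              rpow_le_rpow_of_nonpos (by linarith) (by linarith) (by linarith)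
          _ = _ := by rw [sqrt_eq_rpow, ← rpow_mul hN0.le]; congr 1; ring
      have r2 : (H:ℝ) ^ k ≤ (N:ℝ) ^ (θ * k) := by
        rw [rpow_mul hN0.le, rpow_natCast]; gcongr
      calc _ ≤ (N:ℝ) ^ θ * ((N:ℝ) ^ (θ * k) * A * (N:ℝ) ^ (-κ / 2)) := by gcongr
        _ = A * ((N:ℝ) ^ θ * (N:ℝ) ^ (θ * k) * (N:ℝ) ^ (-κ / 2)) := by ring
        _ = _ := by rw [← rpow_add hN0, ← rpow_add hN0]; congr 2; ring
    · rw [hexp]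
      calc _ ≤ 1 / ((N:ℝ) ^ (-θ) * (A * ((k + 4 : ℝ) * N) ^ (-κ))) := by gcongr
        _ = ((k + 4 : ℝ) ^ κ / A) * ((N:ℝ) ^ θ * (N:ℝ) ^ κ) := by
            rw [rpow_neg hN0.le, rpow_neg (by positivity), mul_rpow (by positivity) hN0.le]
            field_simp
        _ = ((k + 4 : ℝ) ^ κ / A * (N:ℝ) ^ (2 * θ + κ - 1)) * (N / (N:ℝ) ^ θ) := by
            have : (N:ℝ) ^ θ * (N:ℝ) ^ κ = (N:ℝ) ^ (2 * θ + κ - 1) * (N / (N:ℝ) ^ θ) := by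
              have : N / (N:ℝ) ^ θ = (N:ℝ) ^ (1 - θ) := by rw [rpow_sub hN0, rpow_one]
              rw [this, ← rpow_add hN0, ← rpow_add hN0]; congr 1; ring
            rw [this]; ring
        _ ≤ 4 * (N / (N:ℝ) ^ θ) := by gcongr
        _ ≤ 4 * (N / H) := by gcongr
        _ = _ := by ring
  have main2 : 4 * N * (H : ℝ) ^ (-(1 / 2 : ℝ) ^ k) ≤ 8 * (N:ℝ) ^ (1 - θ * q) := by
    have s1 : (H : ℝ) ^ (-q) ≤ ((N:ℝ) ^ θ / 2) ^ (-q) :=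
      rpow_le_rpow_of_nonpos (by positivity) hHge (by linarith)
    have s2 : ((N:ℝ) ^ θ / 2) ^ (-q) = (N:ℝ) ^ (- (θ * q)) * 2 ^ q := by
      rw [div_rpow (by positivity) (by norm_num), ← rpow_mul hN0.le, rpow_neg (by norm_num : (0:ℝ) ≤ 2)]
      rw [div_inv_eq_mul]; congr 2; ring
    have s3 : (2:ℝ) ^ q ≤ 2 := by
      calc (2:ℝ) ^ q ≤ 2 ^ (1:ℝ) := rpow_le_rpow_of_exponent_le (by norm_num) (by linarith)
        _ = 2 := rpow_one _
    have s4 : (N:ℝ) ^ (1 - θ * q) = N * (N:ℝ) ^ (- (θ * q)) := by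
      rw [sub_eq_add_neg, rpow_add hN0, rpow_one]
    rw [s4]
    calc 4 * N * (H : ℝ) ^ (-q) ≤ 4 * N * ((N:ℝ) ^ (- (θ * q)) * 2) := by
          rw [s2] at s1
          gcongr
          exact s1.trans (by gcongr)
      _ = _ := by ring
  have triv : ‖∑ n ∈ range M, ee (α * ((n : ℝ) + 1) ^ c)‖ ≤ 2 * (N:ℝ) ^ (1 - θ * q) := by
    calc _ ≤ ∑ n ∈ range M, (1:ℝ) := norm_sum_le_of_le _ (fun n _ => (norm_ee _).le)
      _ = M := by simp
      _ ≤ 2 * √(N:ℝ) := hM2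
      _ ≤ _ := by
        rw [sqrt_eq_rpow]
        gcongr
        nlinarith
  have split : ∑ n ∈ range N, ee (α * ((n : ℝ) + 1) ^ c) = ∑ n ∈ range M, ee (α * ((n : ℝ) + 1) ^ c)
      + ∑ n ∈ range (N - M), ee ((fun x => α * x ^ c) ((M + 1 : ℝ) + n)) := by
    conv_lhs => rw [show N = M + (N - M) by omega, sum_range_add]
    congr 1
    apply sum_congr rfl
    intro n _
    simp only
    congr 3
    push_cast; ring
  rw [split]
  refine (norm_add_le _ _).trans ?_
  linarith

lemma ee_re (x : ℝ) : (ee x).re = cos (2 * π * x) := Complex.exp_ofReal_mul_I_re _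

lemma cos_sum_le (x : ℕ → ℝ) (h β : ℝ) (N : ℕ) :
    |∑ n ∈ range N, cos (2 * π * h * (x n - β))| ≤ ‖∑ n ∈ range N, ee (h * x n)‖ := by
  have : ∑ n ∈ range N, cos (2 * π * h * (x n - β)) =
      (ee (-(h * β)) * ∑ n ∈ range N, ee (h * x n)).re := by
    rw [mul_sum, Complex.re_sum]
    apply sum_congr rfl
    intro n _
    rw [← ee_add, ee_re]; congr 1; ring
  rw [this]
  refine (Complex.abs_re_le_norm _).trans ?_
  rw [norm_mul, norm_ee, one_mul]

theorem ps2_sum (c θ η : ℝ) (hθ : 0 < θ) (hη : η ≤ θ / 2) (N : ℕ) (hN : 1 ≤ N)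
    (hexp : ∀ α : ℝ, (N : ℝ) ^ (-θ) ≤ α → α ≤ (N : ℝ) ^ θ →
      ‖∑ n ∈ range N, ee (α * ((n : ℝ) + 1) ^ c)‖ ≤ 10 * (N : ℝ) ^ (1 - η))
    (m : ℕ) (hm : 1 ≤ m) (hmN : (m : ℝ) ≤ (N : ℝ) ^ θ) (β : ℝ) :
    |∑ n ∈ range N, ps2 (((n : ℝ) + 1) ^ c / m - β)| ≤
      10 * (∑' h : ℕ, 1 / (h : ℝ) ^ (3 / 2 : ℝ)) * (N : ℝ) ^ (1 - η) := by
  have hN1 : (1:ℝ) ≤ N := by exact_mod_cast hN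
  have hN0 : (0:ℝ) < N := by linarith
  have hm1 : (1:ℝ) ≤ m := by exact_mod_cast hm
  have hsum := hasSum_sum (s := range N) (fun n _ => ps2_fourier (((n : ℝ) + 1) ^ c / m - β))
  have hs : Summable (fun h : ℕ => 1 / (h : ℝ) ^ (3 / 2 : ℝ)) :=
    Real.summable_one_div_nat_rpow.2 (by norm_num)
  have hg := hs.hasSum.mul_left (10 * (N : ℝ) ^ (1 - η))
  have key := hsum.norm_le_of_bounded hg (by
    intro h
    rw [← mul_sum, norm_mul, norm_eq_abs, norm_eq_abs]
    rcases Nat.eq_zero_or_pos h with rfl | hpos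
    · simp
      try positivity
    have hh1 : (1:ℝ) ≤ h := by exact_mod_cast hpos
    have hh0 : (0:ℝ) < h := by linarith
    have hcs := cos_sum_le (fun n => ((n : ℝ) + 1) ^ c / m) h β N
    rw [abs_of_pos (by positivity)]
    have e0 : (h:ℝ) ^ (2:ℕ) = (h:ℝ) ^ (3 / 2 : ℝ) * (h:ℝ) ^ (1 / 2 : ℝ) := by
      rw [← rpow_add hh0, ← rpow_natCast]; norm_num
    have hh12 : 1 ≤ (h:ℝ) ^ (1 / 2 : ℝ) := one_le_rpow hh1 (by norm_num)
    have key2 : |∑ n ∈ range N, cos (2 * π * h * (((n : ℝ) + 1) ^ c / m - β))| ≤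
        10 * (N : ℝ) ^ (1 - η) * (h:ℝ) ^ (1 / 2 : ℝ) := by
      by_cases hle : (h:ℝ) ≤ (N:ℝ) ^ θ
      · have h1 := hexp (h / m) (by
          rw [rpow_neg hN0.le, inv_eq_one_div]
          gcongr) (by
          rw [div_le_iff₀ (by linarith)]
          nlinarith)
        have e1 : ∑ n ∈ range N, ee ((h:ℝ) * (((n : ℝ) + 1) ^ c / m)) =
            ∑ n ∈ range N, ee ((h / m : ℝ) * ((n : ℝ) + 1) ^ c) := by
          apply sum_congr rfl; intro n _; congr 1; ring
        rw [e1] at hcs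
        refine (hcs.trans h1).trans ?_
        exact le_mul_of_one_le_right (by positivity) hh12
      · push Not at hle
        have t1 : |∑ n ∈ range N, cos (2 * π * h * (((n : ℝ) + 1) ^ c / m - β))| ≤ N := by
          refine hcs.trans ?_
          calc _ ≤ ∑ n ∈ range N, (1:ℝ) := norm_sum_le_of_le _ (fun n _ => (norm_ee _).le)
            _ = N := by simp
        have t2 : (N:ℝ) ^ (θ / 2) ≤ (h:ℝ) ^ (1 / 2 : ℝ) := by
          rw [show θ / 2 = θ * (1 / 2) by ring, rpow_mul hN0.le]
          gcongr
        refine t1.trans ?_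
        calc (N:ℝ) = (N:ℝ) ^ (1 - θ / 2) * (N:ℝ) ^ (θ / 2) := by
              rw [← rpow_add hN0]; ring_nf; rw [rpow_one]
          _ ≤ (N:ℝ) ^ (1 - η) * (h:ℝ) ^ (1 / 2 : ℝ) := by
              gcongr
          _ ≤ _ := by
              have : 0 ≤ (N:ℝ) ^ (1 - η) * (h:ℝ) ^ (1 / 2 : ℝ) := by positivity
              nlinarith
    calc _ ≤ 1 / (h:ℝ) ^ 2 * (10 * (N : ℝ) ^ (1 - η) * (h:ℝ) ^ (1 / 2 : ℝ)) := by gcongr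
      _ = _ := by rw [e0]; field_simp)
  rw [← mul_sum, norm_mul, norm_eq_abs, norm_eq_abs, abs_of_pos (by positivity)] at key
  have hpi : 1 ≤ π ^ 2 := by nlinarith [pi_gt_three]
  have := le_mul_of_one_le_left (abs_nonneg (∑ n ∈ range N, ps2 (((n : ℝ) + 1) ^ c / m - β))) hpi
  linarith

lemma ps1_sum (x : ℕ → ℝ) (N : ℕ) (D E : ℝ) (hD : 0 < D)
    (h : ∀ β, |∑ n ∈ range N, ps2 (x n - β)| ≤ E) (β : ℝ) :
    |∑ n ∈ range N, ps1 (x n - β)| ≤ E / D + N * D := by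
  have h0 := abs_le.1 (h β)
  have h1 := abs_le.1 (h (β - D))
  have h2 := abs_le.1 (h (β + D))
  have a1 : ∑ n ∈ range N, ps2 (x n - (β - D)) ≤ ∑ n ∈ range N, ps2 (x n - β) +
      2 * D * ∑ n ∈ range N, ps1 (x n - β) + N * D ^ 2 := by
    rw [mul_sum, ← sum_add_distrib]
    have : (N:ℝ) * D ^ 2 = ∑ n ∈ range N, D ^ 2 := by simp
    rw [this, ← sum_add_distrib]
    apply sum_le_sum
    intro n _
    have := ps2_le (x n - β) D
    rwa [show x n - (β - D) = x n - β + D by ring]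
  have a2 : ∑ n ∈ range N, ps2 (x n - (β + D)) ≤ ∑ n ∈ range N, ps2 (x n - β) +
      2 * (-D) * ∑ n ∈ range N, ps1 (x n - β) + N * D ^ 2 := by
    rw [mul_sum, ← sum_add_distrib]
    have : (N:ℝ) * D ^ 2 = ∑ n ∈ range N, (-D) ^ 2 := by simp
    rw [this, ← sum_add_distrib]
    apply sum_le_sum
    intro n _
    have := ps2_le (x n - β) (-D)
    rwa [show x n - (β + D) = x n - β + -D by ring]
  have hN : 0 ≤ (N:ℝ) * D ^ 2 := by positivity
  have e : E / D + N * D = (E + N * D ^ 2) / D := by field_simp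
  rw [e, le_div_iff₀ hD]
  rw [← abs_of_pos hD, ← abs_mul, abs_of_pos hD, abs_le]
  constructor <;> nlinarith

lemma indicator_eq (X : ℝ) (m : ℕ) (hm : 1 ≤ m) (u : ℤ) (hu0 : 0 ≤ u) (hu : u < m) :
    (if ⌊X⌋ % (m : ℤ) = u then (1:ℝ) else 0) =
      1 / m + ps1 (X / m - (u + 1) / m) - ps1 (X / m - u / m) := by
  have hm0 : (0:ℝ) < m := by exact_mod_cast hm
  obtain ⟨q, hq⟩ : ∃ q : ℤ, q = ⌊X⌋ / m := ⟨_, rfl⟩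
  obtain ⟨r, hr⟩ : ∃ r : ℤ, r = ⌊X⌋ % m := ⟨_, rfl⟩
  have hr0 : 0 ≤ r := by rw [hr]; exact Int.emod_nonneg _ (by omega)
  have hr1 : r < m := by rw [hr]; exact Int.emod_lt_of_pos _ (by omega)
  have hqr : m * q + r = ⌊X⌋ := by rw [hq, hr]; exact Int.mul_ediv_add_emod _ _
  have hqr' : (m:ℝ) * q + r = ⌊X⌋ := by exact_mod_cast hqr
  have hf := Int.floor_add_fract X
  have f0 := Int.fract_nonneg X
  have f1 := Int.fract_lt_one X
  set f := Int.fract X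
  have hX : X = m * q + r + f := by linarith
  have key : ∀ v : ℤ, 0 ≤ v → v ≤ m → Int.fract (X / m - v / m) =
      (r - v + f) / m + if v ≤ r then 0 else 1 := by
    intro v hv0 hv1
    have g0 : (0:ℝ) ≤ v := by exact_mod_cast hv0
    have g1 : (v:ℝ) ≤ m := by exact_mod_cast hv1
    have g2 : (0:ℝ) ≤ r := by exact_mod_cast hr0
    have g3 : (r:ℝ) + 1 ≤ m := by exact_mod_cast hr1
    rw [Int.fract_eq_iff]
    split_ifs with hvr
    · have g4 : (v:ℝ) ≤ r := by exact_mod_cast hvr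
      refine ⟨?_, ?_, q, ?_⟩
      · rw [add_zero]; apply div_nonneg <;> linarith
      · rw [add_zero, div_lt_one hm0]; linarith
      · rw [hX]; field_simp; ring
    · have g4 : (r:ℝ) + 1 ≤ v := by exact_mod_cast (by omega : r + 1 ≤ v)
      refine ⟨?_, ?_, q - 1, ?_⟩
      · rw [div_add_one hm0.ne']; apply div_nonneg <;> linarith
      · have : (r - v + f) / m < 0 := div_neg_of_neg_of_pos (by linarith) hm0
        linarith
      · rw [hX]; push_cast; field_simp; ring
  have k1 := key u hu0 hu.le
  have k2 := key (u + 1) (by omega) (by omega)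
  push_cast at k2
  unfold ps1
  rw [k1, k2, ← hr]
  by_cases c1 : r = u
  · subst c1
    simp; field_simp; ring
  · rw [if_neg c1]
    have : (u + 1 ≤ r) ↔ u ≤ r := by omega
    simp only [this]
    field_simp; ring

theorem stmt_9 (c : ℝ) (hc : 1 < c) (hci : ∀ z : ℤ, c ≠ z) :
    ∃ θ > (0 : ℝ), ∃ δ > (0 : ℝ), ∃ C > (0 : ℝ),
      ∀ N m : ℕ, ∀ u : ℤ, 1 ≤ N → 1 ≤ m → (m : ℝ) ≤ (N : ℝ) ^ θ →
        0 ≤ u → u < m →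
        |(((Finset.Icc 1 N).filter
            (fun n : ℕ => ⌊((n : ℝ)) ^ c⌋ % (m : ℤ) = u)).card : ℝ) - (N : ℝ) / m| ≤
          C * ((N : ℝ) / m) ^ (1 - δ) := by
  obtain ⟨θ, hθ, hθ1, η, hη, hηθ, hev⟩ := expsum c hc hci
  obtain ⟨N0, hN0⟩ := Filter.eventually_atTop.1 hev
  set T : ℝ := ∑' h : ℕ, 1 / (h : ℝ) ^ (3 / 2 : ℝ) with hT
  have hT0 : 0 ≤ T := tsum_nonneg (fun h => by positivity)
  refine ⟨η / 4, by positivity, η / 4, by positivity, N0 + 2 * (10 * T + 1), by positivity, ?_⟩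
  intro N m u hN hm hmN hu0 hu
  have hN1 : (1:ℝ) ≤ N := by exact_mod_cast hN
  have hNp : (0:ℝ) < N := by linarith
  have hm1 : (1:ℝ) ≤ m := by exact_mod_cast hm
  have hmp : (0:ℝ) < m := by linarith
  have hNm : (N:ℝ) ^ (1 - η / 4) ≤ N / m := by
    rw [rpow_sub hNp, rpow_one]; gcongr
  have hbig : (N:ℝ) ^ (1 - η / 2) ≤ ((N:ℝ) / m) ^ (1 - η / 4) := by
    calc (N:ℝ) ^ (1 - η / 2) ≤ (N:ℝ) ^ ((1 - η / 4) * (1 - η / 4)) :=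
          rpow_le_rpow_of_exponent_le hN1 (by nlinarith)
      _ = ((N:ℝ) ^ (1 - η / 4)) ^ (1 - η / 4) := rpow_mul hNp.le _ _
      _ ≤ _ := by
        apply rpow_le_rpow (by positivity) hNm; linarith
  have hone : 1 ≤ ((N:ℝ) / m) ^ (1 - η / 4) :=
    (one_le_rpow hN1 (by linarith)).trans hbig
  have hCp : 0 ≤ 2 * (10 * T + 1) := by positivity
  have hcount : (((Finset.Icc 1 N).filter
      (fun n : ℕ => ⌊((n : ℝ)) ^ c⌋ % (m : ℤ) = u)).card : ℝ) =
      ∑ n ∈ range N, (if ⌊((n : ℝ) + 1) ^ c⌋ % (m : ℤ) = u then (1:ℝ) else 0) := by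
    rw [Finset.card_filter]
    push_cast
    rw [show Finset.Icc 1 N = Finset.Ico 1 (N + 1) from rfl, sum_Ico_eq_sum_range]
    simp [add_comm]
  by_cases hNN : N < N0
  · have h1 : (((Finset.Icc 1 N).filter
      (fun n : ℕ => ⌊((n : ℝ)) ^ c⌋ % (m : ℤ) = u)).card : ℝ) ≤ N := by
      have := Finset.card_filter_le (Finset.Icc 1 N) (fun n : ℕ => ⌊((n : ℝ)) ^ c⌋ % (m : ℤ) = u)
      simp only [Nat.card_Icc, Nat.add_sub_cancel] at this
      exact_mod_cast this
    have h2 : (N:ℝ) / m ≤ N := div_le_self hNp.le hm1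
    have h3 : 0 ≤ (N:ℝ) / m := by positivity
    have h4 : (N:ℝ) ≤ N0 := by exact_mod_cast hNN.le
    have h5 : (0:ℝ) ≤ (((Finset.Icc 1 N).filter
      (fun n : ℕ => ⌊((n : ℝ)) ^ c⌋ % (m : ℤ) = u)).card : ℝ) := by positivity
    have h6 : (N0:ℝ) + 2 * (10 * T + 1) ≤ (N0 + 2 * (10 * T + 1)) * ((N:ℝ) / m) ^ (1 - η / 4) :=
      le_mul_of_one_le_right (by positivity) hone
    rw [abs_le]; constructor <;> linarith
  · have hmθ : (m:ℝ) ≤ (N:ℝ) ^ θ := hmN.trans (rpow_le_rpow_of_exponent_le hN1 (by linarith))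
    have hp2 := ps2_sum c θ η hθ hηθ N hN (hN0 N (not_lt.1 hNN)) m hm hmθ
    have hp1 := ps1_sum (fun n => ((n : ℝ) + 1) ^ c / m) N ((N:ℝ) ^ (-(η / 2))) _ (by positivity) hp2
    have e1 : 10 * T * (N : ℝ) ^ (1 - η) / (N:ℝ) ^ (-(η / 2)) + N * (N:ℝ) ^ (-(η / 2)) =
        (10 * T + 1) * (N:ℝ) ^ (1 - η / 2) := by
      have e2 : N * (N:ℝ) ^ (-(η / 2)) = (N:ℝ) ^ (1 - η / 2) := by
        rw [sub_eq_add_neg, rpow_add hNp, rpow_one]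
      rw [e2, mul_div_assoc, ← rpow_sub hNp]
      rw [show 1 - η - -(η / 2) = 1 - η / 2 by ring]; ring
    simp only [← hT] at hp1
    rw [e1] at hp1
    have e3 : ∑ n ∈ range N, (if ⌊((n : ℝ) + 1) ^ c⌋ % (m : ℤ) = u then (1:ℝ) else 0) =
        N / m + ∑ n ∈ range N, ps1 (((n : ℝ) + 1) ^ c / m - (u + 1) / m)
          - ∑ n ∈ range N, ps1 (((n : ℝ) + 1) ^ c / m - u / m) := by
      rw [sum_congr rfl (fun (n : ℕ) _ => indicator_eq (((n : ℝ) + 1) ^ c) m hm u hu0 hu),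
        sum_sub_distrib, sum_add_distrib]
      simp [div_eq_mul_inv]
    rw [hcount, e3]
    have b1 := abs_le.1 (hp1 ((u + 1) / m))
    have b2 := abs_le.1 (hp1 (u / m))
    have h6 : 2 * (10 * T + 1) * (N:ℝ) ^ (1 - η / 2) ≤
        (N0 + 2 * (10 * T + 1)) * ((N:ℝ) / m) ^ (1 - η / 4) := by
      gcongr
      linarith [(Nat.cast_nonneg N0 : (0:ℝ) ≤ N0)]
    rw [abs_le]; constructor <;> linarith
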